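/- Let R be a commutative ring, q ≥ 2 an integer, and let ∘ be the w-product on R[[x]] with weight w(n,m) = (₍₀,q₎P)_{n,m}. Let a₁ = 1 + z₁ and a₂ = 1 + z₂ where z₁, z₂ ∈ R[[x]] satisfy (z₁)_k = 0 and (z₂)_k = 0 whenever k mod q < ⌈q/2⌉. Then: (a) xⁿ ∘ a₁^{(n)} = xⁿ for every n ≥ 0 with n mod q ≥ ⌈q/2⌉; (b) the ∘-substitution of a₁ into a₂ satisfies a₂∘(a₁) := Σ_{n≥0} (a₂)_n · (xⁿ ∘ a₁^{(n)}) = a₂. -/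

import Mathlib

open PowerSeries

/-- The `w`-product of formal power series:
`[xⁿ](a ∘ b) = ∑_{m=0}^{n} w(n,m)·aₘ·b_{n−m}`. -/
noncomputable def wmul {R : Type*} [CommRing R] (w : ℕ → ℕ → R)
    (a b : PowerSeries R) : PowerSeries R :=
  PowerSeries.mk fun n => ∑ m ∈ Finset.range (n + 1),
    w n m * PowerSeries.coeff m a * PowerSeries.coeff (n - m) b

/-- The `n`-th `∘`-power of `a` (with `a^{(0)} = 1`). -/
noncomputable def wpow {R : Type*} [CommRing R] (w : ℕ → ℕ → R)
    (a : PowerSeries R) : ℕ → PowerSeries R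
  | 0 => 1
  | n + 1 => wmul w a (wpow w a n)

/-- The `∘`-substitution `b∘(a) = ∑_{n≥0} bₙ·(xⁿ ∘ a^{(n)})`, computed
coefficientwise. -/
noncomputable def wsubst {R : Type*} [CommRing R] (w : ℕ → ℕ → R)
    (b a : PowerSeries R) : PowerSeries R :=
  PowerSeries.mk fun k => ∑ n ∈ Finset.range (k + 1),
    PowerSeries.coeff n b * PowerSeries.coeff k (wmul w (X ^ n) (wpow w a n))

/-!
The weight at `(n, m)` vanishes when `n % q < m % q`, so the coefficient of `a ∘ b` at an exponent
of residue below `r` only involves the coefficients of `a` at such exponents. Hence a series that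
agrees with `1` at residues below `r` acts there as a left identity, and its `∘`-powers agree with
`1` there too. In `xⁿ ∘ b` the weight kills every exponent `n + j` for which adding the residues of
`n` and `j` carries past `q`. If `n % q ≥ s` and `r + s ≥ q`, only `j` of residue below `r`
survive, and if `b` agrees with `1` there, then `xⁿ ∘ b = xⁿ`.
-/

/-- The matrix `₍₀,q₎P`, with entries in `R`, as the weight of a `∘`-product. -/
def residueWeight {R : Type*} [Zero R] [One R] (q n m : ℕ) : R :=
  if m ≤ n ∧ m % q ≤ n % q then 1 else 0

/-- The series `1 + z` with `z` supported on exponents of residue at least `r` modulo `q`, encoded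
as agreement with `1` at all other exponents. The `l`-series of `₍₀,q₎P` are the case
`r = ⌈q/2⌉`. -/
def IsLSeries {R : Type*} [Semiring R] (q r : ℕ) (a : PowerSeries R) : Prop :=
  ∀ k, k % q < r → coeff k a = coeff k 1

namespace IsLSeries

variable {R : Type*} [Semiring R] {q r : ℕ}

theorem one_add {z : PowerSeries R} (hz : ∀ k, k % q < r → coeff k z = 0) :
    IsLSeries q r (1 + z) := fun k hk => by
  rw [map_add, hz k hk, add_zero]

theorem eq_zero_or_le_mod_of_coeff_ne_zero {a : PowerSeries R} (ha : IsLSeries q r a) {n : ℕ}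
    (hn : coeff n a ≠ 0) : n = 0 ∨ r ≤ n % q := by
  by_contra! h
  exact hn (by rw [ha n h.2, coeff_one, if_neg h.1])

end IsLSeries

theorem mod_add_mod_lt_of_mod_le_add_mod {q n j : ℕ} (hq : 0 < q) (h : n % q ≤ (n + j) % q) :
    n % q + j % q < q := by
  by_contra! carry
  have := Nat.add_mod_add_of_le_add_mod carry
  have := Nat.mod_lt j hq
  omega

section GeneralWeight

variable {R : Type*} [CommRing R] {w : ℕ → ℕ → R}

theorem coeff_X_pow_wmul (w : ℕ → ℕ → R) (n k : ℕ) (b : PowerSeries R) :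
    coeff k (wmul w (X ^ n) b) = if n ≤ k then w k n * coeff (k - n) b else 0 := by
  simp [wmul, coeff_X_pow]

theorem one_wmul (hw : ∀ n, w n 0 = 1) (b : PowerSeries R) : wmul w 1 b = b := by
  ext k
  rw [← pow_zero X, coeff_X_pow_wmul]
  simp [hw]

theorem wsubst_eq_left {a b : PowerSeries R}
    (h : ∀ n, coeff n b ≠ 0 → wmul w (X ^ n) (wpow w a n) = X ^ n) : wsubst w b a = b := by
  have term_eq (n k : ℕ) : coeff n b * coeff k (wmul w (X ^ n) (wpow w a n)) =
      coeff n b * coeff k (X ^ n) := by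
    by_cases hn : coeff n b = 0
    · simp only [hn, zero_mul]
    · rw [h n hn]
  ext k
  simp [wsubst, term_eq, coeff_X_pow]

end GeneralWeight

theorem residueWeight_zero_right {R : Type*} [Zero R] [One R] (q n : ℕ) :
    residueWeight q n 0 = (1 : R) := by
  simp [residueWeight]

theorem residueWeight_self {R : Type*} [Zero R] [One R] (q n : ℕ) :
    residueWeight q n n = (1 : R) := by
  simp [residueWeight]

theorem residueWeight_eq_zero {R : Type*} [Zero R] [One R] {q n m : ℕ} (h : n % q < m % q) :
    residueWeight q n m = (0 : R) :=
  if_neg fun hnm => h.not_ge hnm.2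

section ResidueWeight

variable {R : Type*} [CommRing R] {q r : ℕ} {a b : PowerSeries R}

theorem coeff_residueWeight_wmul_congr_left {a' : PowerSeries R}
    (h : ∀ m, m % q < r → coeff m a = coeff m a') {k : ℕ} (hk : k % q < r) :
    coeff k (wmul (residueWeight q) a b) = coeff k (wmul (residueWeight q) a' b) := by
  simp only [wmul, coeff_mk]
  refine Finset.sum_congr rfl fun m _ => ?_
  rcases lt_or_ge (k % q) (m % q) with hlt | hle
  · simp only [residueWeight_eq_zero hlt, zero_mul]
  · rw [h m (hle.trans_lt hk)]

namespace IsLSeries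

theorem coeff_wmul (ha : IsLSeries q r a) (b : PowerSeries R) {k : ℕ} (hk : k % q < r) :
    coeff k (wmul (residueWeight q) a b) = coeff k b := by
  rw [coeff_residueWeight_wmul_congr_left ha hk, one_wmul (residueWeight_zero_right q)]

theorem wpow (ha : IsLSeries q r a) (n : ℕ) : IsLSeries q r (wpow (residueWeight q) a n) := by
  induction n with
  | zero => exact fun _ _ => rfl
  | succ n ih => exact fun k hk => (ha.coeff_wmul _ hk).trans (ih k hk)

theorem X_pow_wmul (hb : IsLSeries q r b) (hq : 0 < q) {n : ℕ} (hn : q ≤ r + n % q) :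
    wmul (residueWeight q) (X ^ n) b = X ^ n := by
  ext k
  rw [coeff_X_pow_wmul, coeff_X_pow]
  split_ifs with hnk hkn hkn
  · have r_pos : 0 < r := by
      have := Nat.mod_lt n hq
      omega
    have coeff_zero : coeff 0 b = 1 := by
      rw [hb 0 (by rwa [Nat.zero_mod]), coeff_zero_one]
    rw [hkn, residueWeight_self, Nat.sub_self, coeff_zero, one_mul]
  · obtain ⟨j, rfl⟩ := Nat.exists_eq_add_of_le hnk
    rw [Nat.add_sub_cancel_left]
    rcases lt_or_ge ((n + j) % q) (n % q) with carry | no_carry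
    · rw [residueWeight_eq_zero carry, zero_mul]
    · have := mod_add_mod_lt_of_mod_le_add_mod hq no_carry
      rw [hb j (by omega), coeff_one, if_neg (by omega), mul_zero]
  · omega
  · rfl

end IsLSeries

theorem lseries_subst_general {s : ℕ} (hq : 0 < q) (hrs : q ≤ r + s)
    (ha : IsLSeries q r a) (hb : IsLSeries q s b) :
    (∀ n, s ≤ n % q →
      wmul (residueWeight q) (X ^ n) (wpow (residueWeight q) a n) = X ^ n) ∧
    wsubst (residueWeight q) b a = b := by
  have X_pow_fixed (n : ℕ) (hn : s ≤ n % q) :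
      wmul (residueWeight q) (X ^ n) (wpow (residueWeight q) a n) = X ^ n :=
    (ha.wpow n).X_pow_wmul hq (by omega)
  refine ⟨X_pow_fixed, wsubst_eq_left fun n hn => ?_⟩
  rcases hb.eq_zero_or_le_mod_of_coeff_ne_zero hn with rfl | hsn
  · rw [pow_zero]
    exact one_wmul (residueWeight_zero_right q) 1
  · exact X_pow_fixed n hsn

end ResidueWeight

/-- For the weight `w(n,m) = (₍₀,q₎P)_{n,m}` and `l`-series `a₁ = 1 + z₁`,
`a₂ = 1 + z₂` (with `z₁, z₂` supported on exponents whose residue mod `q` is at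
least `⌈q/2⌉`): (a) `xⁿ ∘ a₁^{(n)} = xⁿ` whenever `n mod q ≥ ⌈q/2⌉`, and
(b) `a₂∘(a₁) = a₂`. -/
theorem lseries_subst {R : Type*} [CommRing R] (q : ℕ) (hq : 2 ≤ q)
    (w : ℕ → ℕ → R)
    (hw : ∀ n m, w n m = if m ≤ n ∧ m % q ≤ n % q then 1 else 0)
    (z₁ z₂ : PowerSeries R)
    (h₁ : ∀ k : ℕ, k % q < (q + 1) / 2 → PowerSeries.coeff k z₁ = 0)
    (h₂ : ∀ k : ℕ, k % q < (q + 1) / 2 → PowerSeries.coeff k z₂ = 0) :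
    (∀ n : ℕ, (q + 1) / 2 ≤ n % q →
      wmul w (X ^ n) (wpow w (1 + z₁) n) = X ^ n) ∧
    wsubst w (1 + z₂) (1 + z₁) = 1 + z₂ := by
  obtain rfl : w = residueWeight q := funext₂ hw
  exact lseries_subst_general (by omega) (by omega) (.one_add h₁) (.one_add h₂)
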